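/- arXiv:1912.02369 — 3 statements merged into one kernel-verified Lean document; each statement's English description precedes it below -/
import Mathlib

section
/- Let λ be a nonzero complex number with |λ| ≠ 1 and let γ = diag(λ⁻², λ, λ). If α ∈ GL(3,ℂ) is upper triangular and at least one of its entries α₁₂, α₁₃ is nonzero (equivalently, α does not leave invariant both the line spanned by e₁ and the plane spanned by e₂, e₃), then the subgroup of GL(3,ℂ) generated by α and γ is not discrete. -/
/-!
Conjugating `α` by the `n`-th power of a diagonal matrix `γ = diag(d)` multiplies its `(i, j)` entry
by `(d i / d j) ^ n`. If `α` is supported where `d i = d j` or `‖d i‖ < ‖d j‖`, then `γⁿ α γ⁻ⁿ`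
converges as matrices, and the limit is invertible because the determinant stays equal to `det α`.
A convergent sequence in a discrete subgroup is eventually constant, but a nonzero entry of `α` with
`‖d i‖ < ‖d j‖` tends to `0` along the sequence without ever vanishing. For
`γ = diag(λ⁻², λ, λ)` this applies to `γ` or to `γ⁻¹` according to whether `|λ| > 1` or `|λ| < 1`.
-/

open Filter Topology Matrix

theorem eventually_eq_of_tendsto_of_forall_mem {G X : Type*} [Group G] [TopologicalSpace G]
    [IsTopologicalGroup G] [T2Space G] {Γ : Subgroup G} [DiscreteTopology Γ] {F : Filter X}
    [F.NeBot] {g : X → G} {l : G} (hg : ∀ x, g x ∈ Γ) (hl : Tendsto g F (𝓝 l)) :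
    ∀ᶠ x in F, g x = l := by
  have hlΓ : l ∈ Γ := Γ.isClosed_of_discrete.mem_of_tendsto hl (Eventually.of_forall hg)
  have hlift : Tendsto (fun x ↦ (⟨g x, hg x⟩ : Γ)) F (𝓝 ⟨l, hlΓ⟩) := tendsto_subtype_rng.2 hl
  rw [nhds_discrete, tendsto_pure] at hlift
  exact hlift.mono fun _ ↦ congrArg Subtype.val

section TopologicalField

variable {ι K : Type*} [Fintype ι] [DecidableEq ι] [Field K] [TopologicalSpace K]
  [IsTopologicalRing K] [ContinuousInv₀ K]

theorem isEmbedding_coe_generalLinearGroup :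
    IsEmbedding ((↑) : GL ι K → Matrix ι ι K) := by
  refine Units.isEmbedding_val_mk' (f := Inv.inv) (fun A hA ↦ ?_) fun u ↦ (coe_units_inv u).symm
  refine (continuousAt_matrix_inv A ?_).continuousWithinAt
  rw [Ring.inverse_eq_inv']
  exact continuousAt_inv₀ ((isUnit_iff_isUnit_det A).1 hA).ne_zero

theorem exists_tendsto_generalLinearGroup_of_det_eq [T2Space K] {X : Type*} {F : Filter X} [F.NeBot]
    {g : X → GL ι K} {L : Matrix ι ι K} {c : K} (hc : c ≠ 0)
    (hdet : ∀ x, (g x : Matrix ι ι K).det = c)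
    (hL : Tendsto (fun x ↦ (g x : Matrix ι ι K)) F (𝓝 L)) :
    ∃ l : GL ι K, (l : Matrix ι ι K) = L ∧ Tendsto g F (𝓝 l) := by
  have hdetL : L.det = c := by
    have hlim := ((continuous_id.matrix_det (R := K)).tendsto L).comp hL
    exact tendsto_nhds_unique (hlim.congr hdet) tendsto_const_nhds
  refine ⟨GeneralLinearGroup.mkOfDetNeZero L (hdetL ▸ hc), rfl, ?_⟩
  exact isEmbedding_coe_generalLinearGroup.tendsto_nhds_iff.2 hL

end TopologicalField

section Diagonal

variable {ι K : Type*} [Fintype ι] [DecidableEq ι] [Field K] {γ : GL ι K} {d : ι → K}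

theorem ne_zero_of_coe_eq_diagonal (hγ : (γ : Matrix ι ι K) = diagonal d) (i : ι) : d i ≠ 0 :=
  (Pi.isUnit_iff.1 (isUnit_diagonal.1 (hγ ▸ γ.isUnit)) i).ne_zero

theorem coe_inv_eq_diagonal (hγ : (γ : Matrix ι ι K) = diagonal d) :
    ((γ⁻¹ : GL ι K) : Matrix ι ι K) = diagonal d⁻¹ := by
  rw [← Units.mul_eq_one_iff_inv_eq, hγ, diagonal_mul_diagonal, ← diagonal_one]
  exact congrArg diagonal (funext fun i ↦ mul_inv_cancel₀ (ne_zero_of_coe_eq_diagonal hγ i))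

theorem conj_pow_apply_of_coe_eq_diagonal (hγ : (γ : Matrix ι ι K) = diagonal d) (α : GL ι K)
    (n : ℕ) (i j : ι) :
    (γ ^ n * α * (γ ^ n)⁻¹ : GL ι K) i j = (d i / d j) ^ n * α i j := by
  have hpow : ((γ ^ n : GL ι K) : Matrix ι ι K) = diagonal (d ^ n) := by
    rw [Units.val_pow_eq_pow_val, hγ, diagonal_pow]
  rw [Units.val_mul, Units.val_mul, hpow, coe_inv_eq_diagonal hpow, mul_diagonal, diagonal_mul,
    Pi.inv_apply, Pi.pow_apply, Pi.pow_apply, div_pow]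
  ring

end Diagonal

section NormedField

variable {ι 𝕜 : Type*} [Fintype ι] [DecidableEq ι] [NormedField 𝕜] {α γ : GL ι 𝕜} {d : ι → 𝕜}

theorem tendsto_conj_pow_of_coe_eq_diagonal (hγ : (γ : Matrix ι ι 𝕜) = diagonal d)
    (hα : ∀ i j, α i j ≠ 0 → d i = d j ∨ ‖d i‖ < ‖d j‖) :
    Tendsto (fun n : ℕ ↦ ((γ ^ n * α * (γ ^ n)⁻¹ : GL ι 𝕜) : Matrix ι ι 𝕜)) atTop
      (𝓝 (of fun i j ↦ open Classical in if d i = d j then α i j else 0)) := by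
  refine tendsto_pi_nhds.2 fun i ↦ tendsto_pi_nhds.2 fun j ↦ ?_
  simp only [conj_pow_apply_of_coe_eq_diagonal hγ, of_apply]
  have hj : d j ≠ 0 := ne_zero_of_coe_eq_diagonal hγ j
  split_ifs with hij
  · simp [hij, div_self hj]
  by_cases hentry : α i j = 0
  · simp [hentry]
  have hlt : ‖d i / d j‖ < 1 := by
    rw [norm_div, div_lt_one (norm_pos_iff.2 hj)]
    exact (hα i j hentry).resolve_left hij
  simpa only [zero_mul] using (tendsto_pow_atTop_nhds_zero_of_norm_lt_one hlt).mul_const (α i j)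

variable {Γ : Subgroup (GL ι 𝕜)}

theorem not_discreteTopology_of_contracting (hαΓ : α ∈ Γ) (hγΓ : γ ∈ Γ)
    (hγ : (γ : Matrix ι ι 𝕜) = diagonal d)
    (hα : ∀ i j, α i j ≠ 0 → d i = d j ∨ ‖d i‖ < ‖d j‖)
    (hne : ∃ i j, d i ≠ d j ∧ α i j ≠ 0) : ¬ DiscreteTopology Γ := by
  intro hΓ
  obtain ⟨i, j, hij, hentry⟩ := hne
  obtain ⟨l, hl, hlim⟩ := exists_tendsto_generalLinearGroup_of_det_eq α.det_ne_zero
    (fun n ↦ det_units_conj (γ ^ n) α) (tendsto_conj_pow_of_coe_eq_diagonal hγ hα)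
  have hmem (n : ℕ) : γ ^ n * α * (γ ^ n)⁻¹ ∈ Γ :=
    Γ.mul_mem (Γ.mul_mem (Γ.pow_mem hγΓ n) hαΓ) (Γ.inv_mem (Γ.pow_mem hγΓ n))
  obtain ⟨n, hn⟩ := (eventually_eq_of_tendsto_of_forall_mem hmem hlim).exists
  have hvanish : (d i / d j) ^ n * α i j = 0 := by
    rw [← conj_pow_apply_of_coe_eq_diagonal hγ, hn, hl, of_apply, if_neg hij]
  have hratio : d i / d j ≠ 0 :=
    div_ne_zero (ne_zero_of_coe_eq_diagonal hγ i) (ne_zero_of_coe_eq_diagonal hγ j)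
  exact mul_ne_zero (pow_ne_zero n hratio) hentry hvanish

theorem not_discreteTopology_of_expanding (hαΓ : α ∈ Γ) (hγΓ : γ ∈ Γ)
    (hγ : (γ : Matrix ι ι 𝕜) = diagonal d)
    (hα : ∀ i j, α i j ≠ 0 → d i = d j ∨ ‖d j‖ < ‖d i‖)
    (hne : ∃ i j, d i ≠ d j ∧ α i j ≠ 0) : ¬ DiscreteTopology Γ := by
  refine not_discreteTopology_of_contracting hαΓ (Γ.inv_mem hγΓ) (coe_inv_eq_diagonal hγ) ?_ ?_
  · intro i j hentry
    refine (hα i j hentry).imp (congrArg Inv.inv) fun hlt ↦ ?_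
    simp only [Pi.inv_apply, norm_inv]
    exact inv_strictAnti₀ (norm_pos_iff.2 (ne_zero_of_coe_eq_diagonal hγ j)) hlt
  · simpa only [Pi.inv_apply, ne_eq, _root_.inv_inj] using hne

theorem stmt_2_general {p : ι → Prop} [DecidablePred p] {μ ν : 𝕜} (hμν : ‖μ‖ ≠ ‖ν‖)
    (hγ : (γ : Matrix ι ι 𝕜) = diagonal fun i ↦ if p i then μ else ν)
    (hblock : ∀ i, ¬ p i → ∀ j, p j → α i j = 0)
    (hne : ∃ i j, p i ∧ ¬ p j ∧ α i j ≠ 0) :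
    ¬ DiscreteTopology (Subgroup.closure {α, γ} : Subgroup (GL ι 𝕜)) := by
  have hαΓ : α ∈ Subgroup.closure {α, γ} := Subgroup.mem_closure_of_mem (by simp)
  have hγΓ : γ ∈ Subgroup.closure {α, γ} := Subgroup.mem_closure_of_mem (by simp)
  have hne' : ∃ i j, (if p i then μ else ν) ≠ (if p j then μ else ν) ∧ α i j ≠ 0 := by
    obtain ⟨i, j, hi, hj, hentry⟩ := hne
    exact ⟨i, j, by rw [if_pos hi, if_neg hj]; exact ne_of_apply_ne _ hμν, hentry⟩
  rcases hμν.lt_or_gt with hlt | hgt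
  · exact not_discreteTopology_of_contracting hαΓ hγΓ hγ (by grind) hne'
  · exact not_discreteTopology_of_expanding hαΓ hγΓ hγ (by grind) hne'

end NormedField

theorem norm_inv_sq_ne_norm {𝕜 : Type*} [NormedDivisionRing 𝕜] {x : 𝕜} (hx : x ≠ 0)
    (hnorm : ‖x‖ ≠ 1) : ‖x⁻¹ ^ 2‖ ≠ ‖x‖ := by
  rw [norm_pow, norm_inv, inv_pow]
  intro h
  have hcube : ‖x‖ ^ 3 = 1 := by
    rw [pow_succ']
    nth_rw 1 [← h]
    exact inv_mul_cancel₀ (pow_ne_zero 2 (norm_ne_zero_iff.2 hx))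
  exact hnorm ((pow_eq_one_iff_of_nonneg (norm_nonneg x) three_ne_zero).1 hcube)

/-- Let `λ ≠ 0` with `|λ| ≠ 1` and `γ = diag(λ⁻², λ, λ)`.  If `α ∈ GL(3, ℂ)` is upper
triangular and at least one of `α₁₂`, `α₁₃` is nonzero, then the subgroup generated by
`α` and `γ` is not discrete. -/
theorem stmt_2 (lam : ℂ) (hlam : lam ≠ 0) (habs : ‖lam‖ ≠ 1)
    (γ α : Matrix.GeneralLinearGroup (Fin 3) ℂ)
    (hγ : (γ : Matrix (Fin 3) (Fin 3) ℂ) = Matrix.diagonal ![lam⁻¹ ^ 2, lam, lam])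
    (hupper : ∀ i j : Fin 3, j < i → (α : Matrix (Fin 3) (Fin 3) ℂ) i j = 0)
    (hα : (α : Matrix (Fin 3) (Fin 3) ℂ) 0 1 ≠ 0 ∨ (α : Matrix (Fin 3) (Fin 3) ℂ) 0 2 ≠ 0) :
    ¬ DiscreteTopology
        (Subgroup.closure {α, γ} : Subgroup (Matrix.GeneralLinearGroup (Fin 3) ℂ)) := by
  refine stmt_2_general (p := (· = 0)) (norm_inv_sq_ne_norm hlam habs) ?_ ?_ ?_
  · rw [hγ]
    exact congrArg diagonal (funext fun i ↦ by fin_cases i <;> rfl)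
  · rintro i hi _ rfl
    exact hupper i 0 (Fin.pos_of_ne_zero hi)
  · exact hα.elim (⟨0, 1, rfl, by decide, ·⟩) (⟨0, 2, rfl, by decide, ·⟩)
end

section
/- Let Γ ≤ GL(3,ℂ) be a discrete subgroup all of whose elements are upper triangular. If Γ contains an irrational screw, i.e. a matrix diag(β⁻², β·e^{4πiθ}, β·e^{2πiθ}) with β ∈ ℂ∖{0}, |β| ≠ 1 and θ ∈ ℝ∖ℚ, then Γ is commutative. -/
/-!
Let `g = diag(d)` be a diagonal element of the discrete group `Γ`; replacing `g` by `g⁻¹` if need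
be, assume that `‖d i‖` is weakly increasing in `i`. Conjugation by `gⁿ` multiplies the `(i, j)`
entry of a matrix by `(d i / d j)ⁿ`, which has norm at most one wherever an upper triangular matrix
may be nonzero. So all the conjugates `gⁿ h g⁻ⁿ` of `h ∈ Γ`, as well as their inverses, stay in a
compact set; by discreteness two of them agree, and `h` commutes with a power `gᵏ`, `k ≠ 0`. If
`d i / d j` is not a root of unity for any `i ≠ j`, the entries of `gᵏ` are distinct, so `h` is
diagonal. For an irrational screw this holds because `‖β‖ ≠ 1` and `θ` is irrational.
-/

open Matrix

section TopologicalGroup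

variable {G : Type*} [Group G] [TopologicalSpace G] [IsTopologicalGroup G] [T2Space G]

theorem finite_inter_of_isCompact_of_discrete {K : Set G} (hK : IsCompact K) (Γ : Subgroup G)
    [DiscreteTopology Γ] : (K ∩ Γ).Finite :=
  (hK.inter_right Γ.isClosed_of_discrete).finite
    ((isDiscrete_iff_discreteTopology.mpr ‹_›).mono Set.inter_subset_right)

theorem exists_pow_commute_of_forall_conj_mem_isCompact {Γ : Subgroup G} [DiscreteTopology Γ]
    {g h : G} (hg : g ∈ Γ) (hh : h ∈ Γ) {K : Set G} (hK : IsCompact K)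
    (hconj : ∀ n : ℕ, g ^ n * h * (g ^ n)⁻¹ ∈ K) : ∃ k : ℕ, k ≠ 0 ∧ Commute (g ^ k) h := by
  have hmem (n : ℕ) : g ^ n * h * (g ^ n)⁻¹ ∈ K ∩ Γ :=
    ⟨hconj n, Γ.mul_mem (Γ.mul_mem (Γ.pow_mem hg n) hh) (Γ.inv_mem (Γ.pow_mem hg n))⟩
  obtain ⟨m, n, hmn, heq⟩ :=
    (finite_inter_of_isCompact_of_discrete hK Γ).exists_lt_map_eq_of_forall_mem hmem
  obtain ⟨k, rfl⟩ := Nat.exists_eq_add_of_le hmn.le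
  have hfix : h = g ^ k * h * (g ^ k)⁻¹ := by
    apply (MulAut.conj (g ^ m)).injective
    simpa only [MulAut.conj_apply, pow_add, _root_.mul_inv_rev, mul_assoc] using heq
  exact ⟨k, by lia, (eq_mul_inv_iff_mul_eq.mp hfix).symm⟩

end TopologicalGroup

theorem isCompact_setOf_units_val_mem_inv_mem {M : Type*} [Monoid M] [TopologicalSpace M]
    [ContinuousMul M] [T1Space M] {K L : Set M} (hK : IsCompact K) (hL : IsCompact L) :
    IsCompact {u : Mˣ | (u : M) ∈ K ∧ (↑u⁻¹ : M) ∈ L} :=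
  Units.isClosedEmbedding_embedProduct.isCompact_preimage
    (hK.prod (MulOpposite.opHomeomorph.symm.isCompact_preimage.mpr hL))

theorem isCompact_setOf_forall_norm_apply_le {m n E : Type*} [SeminormedAddCommGroup E]
    [ProperSpace E] (C : Matrix m n ℝ) : IsCompact {A : Matrix m n E | ∀ i j, ‖A i j‖ ≤ C i j} := by
  have hset : {A : Matrix m n E | ∀ i j, ‖A i j‖ ≤ C i j} =
      Set.univ.pi fun i => Set.univ.pi fun j => Metric.closedBall (0 : E) (C i j) := by
    ext A
    exact ⟨fun hA i _ j _ => mem_closedBall_zero_iff.mpr (hA i j),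
      fun hA i j => mem_closedBall_zero_iff.mp (hA i trivial j trivial)⟩
  rw [hset]
  exact isCompact_univ_pi fun i => isCompact_univ_pi fun j => isCompact_closedBall 0 (C i j)

section Matrix

variable {ι : Type*} [Fintype ι] [DecidableEq ι]

theorem isDiag_of_commute_diagonal {R : Type*} [CommRing R] [NoZeroDivisors R] {d : ι → R}
    (hd : Function.Injective d) {M : Matrix ι ι R} (hM : Commute (diagonal d) M) : M.IsDiag := by
  intro i j hij
  have hentry : d i * M i j = M i j * d j := by
    simpa only [diagonal_mul, mul_diagonal] using congr_fun₂ hM.eq i j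
  have hzero : (d i - d j) * M i j = 0 := by linear_combination hentry
  exact (mul_eq_zero.mp hzero).resolve_left (sub_ne_zero.mpr (hd.ne hij))

variable {𝕜 : Type*}

theorem ne_zero_of_coe_eq_diagonal_s5 [Field 𝕜] {d : ι → 𝕜} {g : GL ι 𝕜}
    (hg : (g : Matrix ι ι 𝕜) = diagonal d) (i : ι) : d i ≠ 0 :=
  (Pi.isUnit_iff.mp (isUnit_diagonal.mp (hg ▸ g.isUnit)) i).ne_zero

theorem coe_inv_eq_diagonal_inv [Field 𝕜] {d : ι → 𝕜} {g : GL ι 𝕜}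
    (hg : (g : Matrix ι ι 𝕜) = diagonal d) : (↑g⁻¹ : Matrix ι ι 𝕜) = diagonal d⁻¹ := by
  refine Units.inv_eq_of_mul_eq_one_right ?_
  rw [hg, diagonal_mul_diagonal', ← diagonal_one]
  congr 1
  ext i
  exact mul_inv_cancel₀ (ne_zero_of_coe_eq_diagonal_s5 hg i)

theorem coe_pow_eq_diagonal_pow {R : Type*} [CommRing R] {d : ι → R} {g : GL ι R}
    (hg : (g : Matrix ι ι R) = diagonal d) (n : ℕ) :
    (↑(g ^ n) : Matrix ι ι R) = diagonal (d ^ n) := by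
  rw [Units.val_pow_eq_pow_val, hg, diagonal_pow]

variable [NormedField 𝕜] {d : ι → 𝕜} {g : GL ι 𝕜}

theorem norm_conj_apply_le_of_blockTriangular (hg : (g : Matrix ι ι 𝕜) = diagonal d)
    {x : GL ι 𝕜} (hx : BlockTriangular (x : Matrix ι ι 𝕜) (‖d ·‖)) (i j : ι) :
    ‖(g * x * g⁻¹ : GL ι 𝕜) i j‖ ≤ ‖x i j‖ := by
  have hentry : (g * x * g⁻¹ : GL ι 𝕜) i j = d i / d j * x i j := by
    simp only [Units.val_mul, hg, coe_inv_eq_diagonal_inv hg, diagonal_mul, mul_diagonal,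
      Pi.inv_apply]
    ring
  rcases lt_or_ge ‖d j‖ ‖d i‖ with hlt | hle
  · rw [hentry, hx hlt, mul_zero]
  · rw [hentry, norm_mul, norm_div]
    exact mul_le_of_le_one_left (norm_nonneg _) (div_le_one_of_le₀ hle (norm_nonneg _))

theorem norm_pow_conj_apply_le_of_blockTriangular (hg : (g : Matrix ι ι 𝕜) = diagonal d)
    {x : GL ι 𝕜} (hx : BlockTriangular (x : Matrix ι ι 𝕜) (‖d ·‖)) (n : ℕ) (i j : ι) :
    ‖(g ^ n * x * (g ^ n)⁻¹ : GL ι 𝕜) i j‖ ≤ ‖x i j‖ := by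
  refine norm_conj_apply_le_of_blockTriangular (coe_pow_eq_diagonal_pow hg n) ?_ i j
  intro i j hij
  simp only [Pi.pow_apply, norm_pow] at hij
  exact hx (lt_of_pow_lt_pow_left₀ n (norm_nonneg _) hij)

variable [ProperSpace 𝕜] {Γ : Subgroup (GL ι 𝕜)} [DiscreteTopology Γ]

theorem exists_pow_commute_of_blockTriangular (hgΓ : g ∈ Γ)
    (hg : (g : Matrix ι ι 𝕜) = diagonal d)
    (hΓ : ∀ x ∈ Γ, BlockTriangular (x : Matrix ι ι 𝕜) (‖d ·‖)) {h : GL ι 𝕜} (hh : h ∈ Γ) :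
    ∃ k : ℕ, k ≠ 0 ∧ Commute (g ^ k) h := by
  refine exists_pow_commute_of_forall_conj_mem_isCompact hgΓ hh
    (isCompact_setOf_units_val_mem_inv_mem
      (isCompact_setOf_forall_norm_apply_le fun i j => ‖h i j‖)
      (isCompact_setOf_forall_norm_apply_le fun i j => ‖h⁻¹ i j‖))
    fun n => ⟨norm_pow_conj_apply_le_of_blockTriangular hg (hΓ h hh) n, fun i j => ?_⟩
  rw [conj_inv]
  exact norm_pow_conj_apply_le_of_blockTriangular hg (hΓ h⁻¹ (Γ.inv_mem hh)) n i j

theorem isDiag_of_mem_of_blockTriangular (hgΓ : g ∈ Γ) (hg : (g : Matrix ι ι 𝕜) = diagonal d)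
    (hd : ∀ k : ℕ, k ≠ 0 → Function.Injective (d ^ k))
    (hΓ : ∀ x ∈ Γ, BlockTriangular (x : Matrix ι ι 𝕜) (‖d ·‖)) {h : GL ι 𝕜} (hh : h ∈ Γ) :
    (h : Matrix ι ι 𝕜).IsDiag := by
  obtain ⟨k, hk, hcomm⟩ := exists_pow_commute_of_blockTriangular hgΓ hg hΓ hh
  refine isDiag_of_commute_diagonal (hd k hk) ?_
  rw [← coe_pow_eq_diagonal_pow hg k]
  exact Commute.units_val_iff.mpr hcomm

theorem commute_of_blockTriangular (hgΓ : g ∈ Γ) (hg : (g : Matrix ι ι 𝕜) = diagonal d)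
    (hd : ∀ k : ℕ, k ≠ 0 → Function.Injective (d ^ k))
    (hΓ : ∀ x ∈ Γ, BlockTriangular (x : Matrix ι ι 𝕜) (‖d ·‖)) :
    ∀ a ∈ Γ, ∀ b ∈ Γ, Commute a b := by
  intro a ha b hb
  rw [← Commute.units_val_iff,
    ← (isDiag_of_mem_of_blockTriangular hgΓ hg hd hΓ ha).diagonal_diag,
    ← (isDiag_of_mem_of_blockTriangular hgΓ hg hd hΓ hb).diagonal_diag]
  exact commute_diagonal _ _

end Matrix

theorem blockTriangular_of_isUpperTriangular_of_monotone {ι R α : Type*} [LinearOrder ι] [Zero R]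
    [Preorder α] {M : Matrix ι ι R} (hM : M.IsUpperTriangular) {b : ι → α} (hb : Monotone b) :
    BlockTriangular M b :=
  fun _ _ hij => hM (hb.reflect_lt hij)

theorem stmt_5_general {ι 𝕜 : Type*} [Fintype ι] [LinearOrder ι] [NormedField 𝕜] [ProperSpace 𝕜]
    (Γ : Subgroup (GL ι 𝕜)) [DiscreteTopology Γ]
    (hupper : ∀ γ ∈ Γ, (γ : Matrix ι ι 𝕜).IsUpperTriangular)
    (hdiag : ∃ γ ∈ Γ, ∃ d : ι → 𝕜, (Monotone (‖d ·‖) ∨ Antitone (‖d ·‖)) ∧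
      (∀ k : ℕ, k ≠ 0 → Function.Injective (d ^ k)) ∧ (γ : Matrix ι ι 𝕜) = diagonal d) :
    ∀ a ∈ Γ, ∀ b ∈ Γ, a * b = b * a := by
  obtain ⟨g, hgΓ, d, hnorm, hd, hg⟩ := hdiag
  rcases hnorm with hmono | hanti
  · exact commute_of_blockTriangular hgΓ hg hd fun γ hγ =>
      blockTriangular_of_isUpperTriangular_of_monotone (hupper γ hγ) hmono
  · have hd_inv (k : ℕ) (hk : k ≠ 0) : Function.Injective (d⁻¹ ^ k) := by
      rw [inv_pow]
      exact inv_injective.comp (hd k hk)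
    have hmono : Monotone (‖d⁻¹ ·‖) := fun i j hij => by
      simpa only [Pi.inv_apply, norm_inv] using
        inv_anti₀ (norm_pos_iff.mpr (ne_zero_of_coe_eq_diagonal_s5 hg j)) (hanti hij)
    exact commute_of_blockTriangular (Γ.inv_mem hgΓ) (coe_inv_eq_diagonal_inv hg) hd_inv
      fun γ hγ => blockTriangular_of_isUpperTriangular_of_monotone (hupper γ hγ) hmono

theorem norm_exp_two_pi_mul_I_mul (θ : ℝ) :
    ‖Complex.exp (2 * (Real.pi : ℂ) * Complex.I * (θ : ℂ))‖ = 1 := by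
  rw [← Complex.norm_exp_ofReal_mul_I (2 * Real.pi * θ)]
  push_cast
  ring_nf

theorem exp_two_pi_mul_I_mul_pow_ne_one {θ : ℝ} (hθ : Irrational θ) {k : ℕ} (hk : k ≠ 0) :
    Complex.exp (2 * (Real.pi : ℂ) * Complex.I * (θ : ℂ)) ^ k ≠ 1 := by
  rw [← Complex.exp_nat_mul, Ne, Complex.exp_eq_one_iff]
  rintro ⟨m, hm⟩
  have hkθ_complex : (k : ℂ) * θ = m :=
    mul_right_cancel₀ Complex.two_pi_I_ne_zero (by linear_combination hm)
  have hkθ : (k : ℝ) * θ = m := by exact_mod_cast hkθ_complex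
  exact (hθ.natCast_mul hk).ne_int m hkθ

theorem inv_sq_pow_ne_pow {r : ℝ} (hr : 0 < r) (hr1 : r ≠ 1) {k : ℕ} (hk : k ≠ 0) :
    (r⁻¹ ^ 2) ^ k ≠ r ^ k := by
  intro heq
  have hbase : r⁻¹ ^ 2 = r := (pow_left_inj₀ (by positivity) hr.le hk).mp heq
  have hcube : r ^ 3 = 1 := by
    field_simp at hbase
    exact hbase.symm
  exact hr1 ((pow_eq_one_iff_of_nonneg hr.le three_ne_zero).mp hcube)

/-- The diagonal entries of the screw with parameters `β` and `θ`; the screw is irrational when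
`‖β‖ ≠ 1` and `θ` is irrational. -/
noncomputable def screwDiag (β : ℂ) (θ : ℝ) : Fin 3 → ℂ :=
  ![β⁻¹ ^ 2, β * Complex.exp (4 * (Real.pi : ℂ) * Complex.I * (θ : ℂ)),
    β * Complex.exp (2 * (Real.pi : ℂ) * Complex.I * (θ : ℂ))]

theorem screwDiag_one_eq_mul (β : ℂ) (θ : ℝ) : screwDiag β θ 1 =
    screwDiag β θ 2 * Complex.exp (2 * (Real.pi : ℂ) * Complex.I * (θ : ℂ)) := by
  simp only [screwDiag, cons_val, mul_assoc, ← Complex.exp_add]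
  ring_nf

theorem norm_screwDiag (β : ℂ) (θ : ℝ) :
    (‖screwDiag β θ ·‖) = ![‖β‖⁻¹ ^ 2, ‖β‖, ‖β‖] := by
  have h₂ : ‖screwDiag β θ 2‖ = ‖β‖ := by
    simp only [screwDiag, cons_val, norm_mul, norm_exp_two_pi_mul_I_mul, mul_one]
  have h₁ : ‖screwDiag β θ 1‖ = ‖β‖ := by
    rw [screwDiag_one_eq_mul, norm_mul, h₂, norm_exp_two_pi_mul_I_mul, mul_one]
  ext i
  fin_cases i
  · simp [screwDiag]
  · exact h₁
  · exact h₂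

theorem monotone_or_antitone_norm_screwDiag (β : ℂ) (θ : ℝ) :
    Monotone (‖screwDiag β θ ·‖) ∨ Antitone (‖screwDiag β θ ·‖) := by
  rw [norm_screwDiag]
  simpa [-inv_pow, Subsingleton.monotone, Subsingleton.antitone] using
    le_total (‖β‖⁻¹ ^ 2) ‖β‖

theorem screwDiag_pow_injective {β : ℂ} {θ : ℝ} (hβ : β ≠ 0) (hβ1 : ‖β‖ ≠ 1)
    (hθ : Irrational θ) {k : ℕ} (hk : k ≠ 0) : Function.Injective (screwDiag β θ ^ k) := by
  have hnorm (i : Fin 3) : ‖screwDiag β θ i ^ k‖ = ![‖β‖⁻¹ ^ 2, ‖β‖, ‖β‖] i ^ k := by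
    rw [norm_pow, ← congrFun (norm_screwDiag β θ) i]
  have hnorm_ne := inv_sq_pow_ne_pow (norm_pos_iff.mpr hβ) hβ1 hk
  have h₀₁ : screwDiag β θ 0 ^ k ≠ screwDiag β θ 1 ^ k :=
    ne_of_apply_ne norm (by rw [hnorm, hnorm]; exact hnorm_ne)
  have h₀₂ : screwDiag β θ 0 ^ k ≠ screwDiag β θ 2 ^ k :=
    ne_of_apply_ne norm (by rw [hnorm, hnorm]; exact hnorm_ne)
  have h₁₂ : screwDiag β θ 1 ^ k ≠ screwDiag β θ 2 ^ k := by
    have hne : screwDiag β θ 2 ≠ 0 := mul_ne_zero hβ (Complex.exp_ne_zero _)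
    rw [screwDiag_one_eq_mul, mul_pow, Ne, mul_eq_left₀ (pow_ne_zero k hne)]
    exact exp_two_pi_mul_I_mul_pow_ne_one hθ hk
  refine Function.Injective.of_lt_imp_ne fun i j hij => ?_
  fin_cases i <;> fin_cases j <;> first | exact absurd hij (by decide) | assumption

/-- If a discrete subgroup `Γ ≤ GL(3, ℂ)` consisting of upper triangular matrices
contains an irrational screw `diag(β⁻², β·e^{4πiθ}, β·e^{2πiθ})` (`|β| ≠ 1`, `θ`
irrational), then `Γ` is commutative. -/
theorem stmt_5 (Γ : Subgroup (Matrix.GeneralLinearGroup (Fin 3) ℂ))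
    (hdisc : DiscreteTopology Γ)
    (hupper : ∀ γ ∈ Γ, ∀ i j : Fin 3, j < i → (γ : Matrix (Fin 3) (Fin 3) ℂ) i j = 0)
    (hscrew : ∃ γ ∈ Γ, ∃ (β : ℂ) (θ : ℝ), β ≠ 0 ∧ ‖β‖ ≠ 1 ∧ Irrational θ ∧
      (γ : Matrix (Fin 3) (Fin 3) ℂ) =
        Matrix.diagonal
          ![β⁻¹ ^ 2, β * Complex.exp (4 * (Real.pi : ℂ) * Complex.I * (θ : ℂ)),
            β * Complex.exp (2 * (Real.pi : ℂ) * Complex.I * (θ : ℂ))]) :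
    ∀ a ∈ Γ, ∀ b ∈ Γ, a * b = b * a := by
  obtain ⟨γ, hγ, β, θ, hβ, hβ1, hθ, hγd⟩ := hscrew
  exact stmt_5_general Γ (fun g hg i j => hupper g hg i j) ⟨γ, hγ, screwDiag β θ,
    monotone_or_antitone_norm_screwDiag β θ, fun _ => screwDiag_pow_injective hβ hβ1 hθ, hγd⟩
end

section
/- Let Γ ≤ GL(3,ℂ) be a discrete, non-commutative subgroup all of whose elements are upper triangular, such that Γ is torsion free and the multiplicative groups λ₁₂(Γ) and λ₂₃(Γ) are torsion free. Then Γ contains no complex homothety of the form diag(λ⁻², λ, λ) with λ ∈ ℂ∖{0} and |λ| ≠ 1. -/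
/-!
Let `g = diag(a, b, b) ∈ Γ` with `|a| ≠ |b|`; replacing `g` by `g⁻¹`, assume `|a| < |b|`. The
conjugates of `γ ∈ Γ` by the powers of `g` have bounded entries and the same determinant as `γ`, so
by discreteness there are only finitely many of them and some positive power of `g` commutes with
`γ`. Comparing entries, `γ₁₂ = γ₁₃ = 0`.

Commutators of matrices of this shape are transvections in the entry `(2, 3)`. If one of them is
nontrivial, conjugation by `k ∈ Γ` multiplies its entry by `λ₂₃(k)`, and the same finiteness
argument, applied to `k` or `k⁻¹`, makes `λ₂₃(k)` a root of unity, hence `1`. But upper triangular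
matrices of this shape with `λ₂₃ = 1` commute.
-/

open Matrix
open scoped commutatorElement

lemma commutatorElement_mem {G : Type*} [Group G] {H : Subgroup G} {a b : G} (ha : a ∈ H)
    (hb : b ∈ H) : ⁅a, b⁆ ∈ H :=
  H.mul_mem (H.mul_mem (H.mul_mem ha hb) (H.inv_mem ha)) (H.inv_mem hb)

lemma coe_inv_eq_diagonal_s6 {n K : Type*} [Fintype n] [DecidableEq n] [Field K] {g : GL n K}
    {d : n → K} (hg : (g : Matrix n n K) = diagonal d) :
    ((g⁻¹ : GL n K) : Matrix n n K) = diagonal d⁻¹ := by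
  have hd : IsUnit d := isUnit_diagonal.1 (hg ▸ g.isUnit)
  refine Units.inv_eq_of_mul_eq_one_right ?_
  rw [hg, diagonal_mul_diagonal, ← diagonal_one]
  congr 1
  ext i
  exact mul_inv_cancel₀ (Pi.isUnit_iff.1 hd i).ne_zero

section Discrete

lemma isEmbedding_coe_generalLinearGroup_s6 {n K : Type*} [Fintype n] [DecidableEq n] [Field K]
    [TopologicalSpace K] [IsTopologicalDivisionRing K] :
    Topology.IsEmbedding ((↑) : GL n K → Matrix n n K) := by
  refine Units.isEmbedding_val_mk' (f := (·⁻¹)) (fun A hA ↦ ?_) fun γ ↦ (coe_units_inv γ).symm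
  have hdet : A.det ≠ 0 := (A.isUnit_iff_isUnit_det.1 hA).ne_zero
  simp only [inv_def, Ring.inverse_eq_inv']
  exact ((continuous_id.matrix_det.continuousAt.inv₀ hdet).smul
    continuous_id.matrix_adjugate.continuousAt).continuousWithinAt

variable {n 𝕜 : Type*} [Fintype n] [DecidableEq n] [NormedField 𝕜] [ProperSpace 𝕜]

lemma isCompact_setOf_det_eq_norm_apply_le (δ : 𝕜ˣ) (C : n → n → ℝ) :
    IsCompact {γ : GL n 𝕜 | GeneralLinearGroup.det γ = δ ∧ ∀ i j, ‖γ i j‖ ≤ C i j} := by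
  have hbox : IsCompact {A : n → n → 𝕜 | ∀ i j, ‖A i j‖ ≤ C i j} := by
    simpa [Set.pi] using isCompact_univ_pi fun i ↦ isCompact_univ_pi fun j ↦
      isCompact_closedBall (0 : 𝕜) (C i j)
  have hK : IsCompact {A : Matrix n n 𝕜 | A.det = δ ∧ ∀ i j, ‖A i j‖ ≤ C i j} :=
    hbox.inter_left (isClosed_eq continuous_id.matrix_det continuous_const)
  have hunits : {A : Matrix n n 𝕜 | A.det = δ ∧ ∀ i j, ‖A i j‖ ≤ C i j} ⊆
      Set.range ((↑) : GL n 𝕜 → Matrix n n 𝕜) := fun A hA ↦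
    A.isUnit_iff_isUnit_det.2 (hA.1 ▸ δ.isUnit)
  simpa only [Set.preimage_ofPred_eq, Units.ext_iff, GeneralLinearGroup.val_det_apply] using
    isEmbedding_coe_generalLinearGroup_s6.isInducing.isCompact_preimage' hK hunits

variable {Γ : Subgroup (GL n 𝕜)} [DiscreteTopology Γ]

lemma finite_setOf_mem_det_eq_norm_apply_le (δ : 𝕜ˣ) (C : n → n → ℝ) :
    {γ | γ ∈ Γ ∧ GeneralLinearGroup.det γ = δ ∧ ∀ i j, ‖γ i j‖ ≤ C i j}.Finite :=
  ((isCompact_setOf_det_eq_norm_apply_le δ C).inter_left Γ.isClosed_of_discrete).finite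
    (DiscreteTopology.isDiscrete.mono Set.inter_subset_left)

lemma exists_pow_commute_of_norm_conj_apply_le {g γ : GL n 𝕜} (hg : g ∈ Γ) (hγ : γ ∈ Γ)
    {C : n → n → ℝ} (hC : ∀ (k : ℕ) i j, ‖(g ^ k * γ * (g ^ k)⁻¹) i j‖ ≤ C i j) :
    ∃ m : ℕ, 0 < m ∧ Commute (g ^ m) γ := by
  have hdet (k : ℕ) : GeneralLinearGroup.det (g ^ k * γ * (g ^ k)⁻¹) =
      GeneralLinearGroup.det γ := by
    simp only [map_mul, map_inv, mul_inv_cancel_comm]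
  have hmem (k : ℕ) : g ^ k * γ * (g ^ k)⁻¹ ∈ {α | α ∈ Γ ∧
      GeneralLinearGroup.det α = GeneralLinearGroup.det γ ∧ ∀ i j, ‖α i j‖ ≤ C i j} :=
    ⟨Γ.mul_mem (Γ.mul_mem (Γ.pow_mem hg k) hγ) (Γ.inv_mem (Γ.pow_mem hg k)), hdet k, hC k⟩
  obtain ⟨k, l, hkl, heq⟩ :=
    (finite_setOf_mem_det_eq_norm_apply_le _ _).exists_lt_map_eq_of_forall_mem hmem
  have hconj : MulAut.conj (g ^ k) γ = MulAut.conj (g ^ k) (MulAut.conj (g ^ (l - k)) γ) := by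
    rw [← MulAut.mul_apply, ← map_mul, ← pow_add, Nat.add_sub_cancel' hkl.le]
    exact heq
  refine ⟨l - k, Nat.sub_pos_of_lt hkl, ?_⟩
  exact (mul_inv_eq_iff_eq_mul.1 ((MulAut.conj (g ^ k)).injective hconj).symm)

lemma apply_eq_zero_of_diagonal_mem {g γ : GL n 𝕜} (hg : g ∈ Γ) (hγ : γ ∈ Γ) {d : n → 𝕜}
    (hgd : (g : Matrix n n 𝕜) = diagonal d) (hzero : ∀ i j, ‖d j‖ < ‖d i‖ → γ i j = 0)
    {i j : n} (hij : ‖d i‖ < ‖d j‖) : γ i j = 0 := by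
  have hpow (k : ℕ) : (g ^ k : GL n 𝕜).val = diagonal (d ^ k) := by
    rw [Units.val_pow_eq_pow_val, hgd, diagonal_pow]
  have hconj (k : ℕ) (i j) : (g ^ k * γ * (g ^ k)⁻¹) i j = (d i / d j) ^ k * γ i j := by
    simp only [Units.val_mul, coe_inv_eq_diagonal_s6 (hpow k), hpow, diagonal_mul, mul_diagonal,
      Pi.pow_apply, Pi.inv_apply]
    ring
  have hbound (k : ℕ) (i j) : ‖(g ^ k * γ * (g ^ k)⁻¹) i j‖ ≤ ‖γ i j‖ := by
    rw [hconj, norm_mul, norm_pow, norm_div]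
    rcases le_or_gt ‖d i‖ ‖d j‖ with hle | hlt
    · exact mul_le_of_le_one_left (norm_nonneg _)
        (pow_le_one₀ (by positivity) (div_le_one_of_le₀ hle (norm_nonneg _)))
    · simp [hzero i j hlt]
  obtain ⟨m, hm, hcomm⟩ := exists_pow_commute_of_norm_conj_apply_le hg hγ hbound
  have hentry : d i ^ m * γ i j = γ i j * d j ^ m := by
    simpa [hpow] using congrArg (fun A : GL n 𝕜 ↦ A i j) hcomm.eq
  by_contra hne
  have hpow_eq : d i ^ m = d j ^ m := mul_left_cancel₀ hne (by rw [mul_comm, hentry])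
  exact (pow_lt_pow_left₀ hij (norm_nonneg _) hm.ne').ne
    (by rw [← norm_pow, hpow_eq, norm_pow])

lemma isOfFinOrder_of_semiconjBy_transvection_of_norm_le_one {k t : GL n 𝕜} (hk : k ∈ Γ)
    (ht : t ∈ Γ) {p q : n} {x μ : 𝕜} (hx : x ≠ 0) (htx : (t : Matrix n n 𝕜) = transvection p q x)
    (hsemi : ∀ y, SemiconjBy (k : Matrix n n 𝕜) (transvection p q y) (transvection p q (μ * y)))
    (hμ : ‖μ‖ ≤ 1) : IsOfFinOrder μ := by
  have hconj (m : ℕ) : (k ^ m * t * (k ^ m)⁻¹ : GL n 𝕜).val = transvection p q (μ ^ m * x) := by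
    have hpow : SemiconjBy ((k ^ m : GL n 𝕜) : Matrix n n 𝕜) (transvection p q x)
        (transvection p q (μ ^ m * x)) := by
      induction m with
      | zero => simp
      | succ m ih =>
        rw [pow_succ', pow_succ', Units.val_mul, mul_assoc]
        exact (hsemi _).mul_left ih
    rw [Units.val_mul, Units.val_mul, htx, hpow.eq, mul_assoc, Units.mul_inv, mul_one]
  have hbound (m : ℕ) (i j) : ‖(k ^ m * t * (k ^ m)⁻¹) i j‖ ≤
      ‖(1 : Matrix n n 𝕜) i j‖ + ‖x‖ := by
    rw [hconj, transvection, Matrix.add_apply]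
    refine (norm_add_le _ _).trans (add_le_add_right ?_ _)
    rw [single_apply]
    split_ifs
    · rw [norm_mul, norm_pow]
      exact mul_le_of_le_one_left (norm_nonneg _) (pow_le_one₀ (norm_nonneg _) hμ)
    · simp
  obtain ⟨m, hm, hcomm⟩ := exists_pow_commute_of_norm_conj_apply_le hk ht hbound
  have hfix : transvection p q (μ ^ m * x) = transvection p q x := by
    rw [← hconj, hcomm.eq, mul_inv_cancel_right, htx]
  have hscale : μ ^ m * x = x := by
    simpa [transvection] using congrFun₂ hfix p q
  exact isOfFinOrder_iff_pow_eq_one.2 ⟨m, hm, mul_eq_right₀ hx |>.1 hscale⟩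

lemma isOfFinOrder_of_semiconjBy_transvection {k t : GL n 𝕜} (hk : k ∈ Γ)
    (ht : t ∈ Γ) {p q : n} {x μ : 𝕜} (hx : x ≠ 0) (htx : (t : Matrix n n 𝕜) = transvection p q x)
    (hsemi : ∀ y, SemiconjBy (k : Matrix n n 𝕜) (transvection p q y) (transvection p q (μ * y))) :
    IsOfFinOrder μ := by
  rcases le_or_gt ‖μ‖ 1 with hle | hgt
  · exact isOfFinOrder_of_semiconjBy_transvection_of_norm_le_one hk ht hx htx hsemi hle
  · have hμ : μ ≠ 0 := norm_pos_iff.1 (one_pos.trans hgt)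
    have hsemi_inv (y) : SemiconjBy ((k⁻¹ : GL n 𝕜) : Matrix n n 𝕜) (transvection p q y)
        (transvection p q (μ⁻¹ * y)) := by
      simpa [hμ] using (hsemi (μ⁻¹ * y)).units_inv_symm_left
    have hfin : IsOfFinOrder μ⁻¹ :=
      isOfFinOrder_of_semiconjBy_transvection_of_norm_le_one (Γ.inv_mem hk) ht hx htx hsemi_inv
        (norm_inv μ ▸ inv_le_one_of_one_le₀ hgt.le)
    simpa only [isOfFinOrder_iff_pow_eq_one, inv_pow, inv_eq_one] using hfin

end Discrete

/-- The matrix `A` is diagonal up to its entry at `(p, q)`. For `p ≠ q` the invertible matrices of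
this kind are, up to diagonal factors, affine maps of the line with linear part `A p p / A q q`. -/
def IsDiagExcept {n R : Type*} [Zero R] (p q : n) (A : Matrix n n R) : Prop :=
  ∀ ⦃i j⦄, i ≠ j → (i, j) ≠ (p, q) → A i j = 0

lemma isDiagExcept_transvection {n R : Type*} [DecidableEq n] [CommRing R] {p q : n} (z : R) :
    IsDiagExcept p q (transvection p q z) := fun i j hij h ↦ by
  rw [transvection, Matrix.add_apply, one_apply_ne hij, single_apply_of_ne, zero_add]
  exact fun h' ↦ h (Prod.ext h'.1.symm h'.2.symm)

namespace IsDiagExcept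

variable {n R : Type*} {p q : n}

lemma eq_diagonal_add_single [DecidableEq n] [AddMonoid R] {A : Matrix n n R}
    (hA : IsDiagExcept p q A) (hpq : p ≠ q) : A = diagonal A.diag + single p q (A p q) := by
  ext i j
  rcases eq_or_ne i j with rfl | hij
  · simp [single_apply_of_ne _ _ _ _ _ fun h : p = i ∧ q = i ↦ hpq (h.1.trans h.2.symm)]
  · by_cases h : (i, j) = (p, q)
    · obtain ⟨rfl, rfl⟩ := Prod.mk.inj h
      simp [hij]
    · rw [hA hij h, Matrix.add_apply, diagonal_apply_ne _ hij, single_apply_of_ne, zero_add]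
      exact fun h' ↦ h (Prod.ext h'.1.symm h'.2.symm)

lemma eq_transvection [DecidableEq n] [CommRing R] {A : Matrix n n R}
    (hA : IsDiagExcept p q A) (hpq : p ≠ q) (hdiag : ∀ i, A i i = 1) :
    A = transvection p q (A p q) := by
  conv_lhs => rw [hA.eq_diagonal_add_single hpq]
  rw [transvection, ← diagonal_one]
  congr 2
  exact funext hdiag

variable [Fintype n]

lemma mul_eq [DecidableEq n] [Semiring R] {A B : Matrix n n R} (hA : IsDiagExcept p q A)
    (hB : IsDiagExcept p q B) (hpq : p ≠ q) :
    A * B = diagonal (fun i ↦ A i i * B i i) +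
      single p q (A p p * B p q + A p q * B q q) := by
  conv_lhs => rw [hA.eq_diagonal_add_single hpq, hB.eq_diagonal_add_single hpq]
  rw [add_mul, mul_add, mul_add, diagonal_mul_diagonal, single_mul_single_of_ne _ _ _ _ hpq.symm,
    add_zero, add_assoc, single_add]
  congr 2
  · ext i j
    rw [diagonal_mul, single_apply, single_apply]
    split_ifs with hij
    · rw [← hij.1, diag_apply]
    · rw [mul_zero]
  · ext i j
    rw [mul_diagonal, single_apply, single_apply]
    split_ifs with hij
    · rw [← hij.2, diag_apply]
    · rw [zero_mul]

lemma mul_apply_self [Semiring R] {A B : Matrix n n R} (hA : IsDiagExcept p q A)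
    (hB : IsDiagExcept p q B) (hpq : p ≠ q) (i : n) : (A * B) i i = A i i * B i i := by
  classical
  rw [hA.mul_eq hB hpq, Matrix.add_apply, diagonal_apply_eq, single_apply_of_ne, add_zero]
  rintro ⟨rfl, rfl⟩
  exact hpq rfl

lemma commute_of_apply_self_eq [CommSemiring R] {A B : Matrix n n R} (hA : IsDiagExcept p q A)
    (hB : IsDiagExcept p q B) (hpq : p ≠ q) (hAd : A p p = A q q) (hBd : B p p = B q q) :
    Commute A B := by
  classical
  rw [Commute, SemiconjBy, hA.mul_eq hB hpq, hB.mul_eq hA hpq, hAd, hBd]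
  simp only [mul_comm, add_comm]

lemma semiconjBy_transvection [DecidableEq n] [Field R] {A : Matrix n n R}
    (hA : IsDiagExcept p q A) (hpq : p ≠ q) (hq : A q q ≠ 0) (y : R) :
    SemiconjBy A (transvection p q y) (transvection p q (A p p / A q q * y)) := by
  have hself (z : R) (i : n) : transvection p q z i i = 1 := by
    rw [transvection, Matrix.add_apply, one_apply_eq, single_apply_of_ne, add_zero]
    exact fun h ↦ hpq (h.1.trans h.2.symm)
  have hcorner (z : R) : transvection p q z p q = z := by simp [transvection, hpq]
  rw [SemiconjBy, hA.mul_eq (isDiagExcept_transvection _) hpq,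
    (isDiagExcept_transvection _).mul_eq hA hpq]
  simp only [hself, hcorner, mul_one, one_mul]
  rw [mul_right_comm, div_mul_cancel₀ _ hq, add_comm (A p q)]

end IsDiagExcept

section Subgroup

variable {n R : Type*} [Fintype n] [DecidableEq n] [CommRing R] {Γ : Subgroup (GL n R)} {p q : n}

lemma isUnit_apply_self_of_isDiagExcept (hΓ : ∀ γ ∈ Γ, IsDiagExcept p q (γ : Matrix n n R))
    (hpq : p ≠ q) {γ : GL n R} (hγ : γ ∈ Γ) (i : n) : IsUnit (γ i i) := by
  refine IsUnit.of_mul_eq_one ((γ⁻¹) i i) ?_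
  rw [← (hΓ γ hγ).mul_apply_self (hΓ _ (Γ.inv_mem hγ)) hpq, Units.mul_inv, one_apply_eq]

lemma exists_commutatorElement_eq_transvection
    (hΓ : ∀ γ ∈ Γ, IsDiagExcept p q (γ : Matrix n n R)) (hpq : p ≠ q) {a b : GL n R}
    (ha : a ∈ Γ) (hb : b ∈ Γ) :
    ∃ x, ((⁅a, b⁆ : GL n R) : Matrix n n R) = transvection p q x := by
  have hc : ⁅a, b⁆ ∈ Γ := commutatorElement_mem ha hb
  have hmul {α β : GL n R} (hα : α ∈ Γ) (hβ : β ∈ Γ) (i : n) : (α * β) i i = α i i * β i i :=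
    (hΓ α hα).mul_apply_self (hΓ β hβ) hpq i
  refine ⟨_, (hΓ _ hc).eq_transvection hpq fun i ↦ ?_⟩
  refine (isUnit_apply_self_of_isDiagExcept hΓ hpq (Γ.mul_mem hb ha) i).mul_right_cancel ?_
  calc ⁅a, b⁆ i i * (b * a) i i = (⁅a, b⁆ * (b * a)) i i := (hmul hc (Γ.mul_mem hb ha) i).symm
    _ = (a * b) i i := by rw [commutatorElement_def]; group
    _ = 1 * (b * a) i i := by rw [hmul ha hb, hmul hb ha, mul_comm, one_mul]

end Subgroup

lemma norm_inv_sq_ne_norm_s6 {K : Type*} [NormedField K] {x : K} (hx0 : x ≠ 0) (hx1 : ‖x‖ ≠ 1) :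
    ‖x⁻¹ ^ 2‖ ≠ ‖x‖ := by
  intro h
  have hcube : ‖x‖ ^ 3 = 1 := by
    rw [norm_pow, norm_inv, inv_pow, inv_eq_iff_eq_inv] at h
    rw [pow_succ, h, inv_mul_cancel₀ (norm_ne_zero_iff.2 hx0)]
  exact hx1 ((pow_eq_one_iff_of_nonneg (norm_nonneg x) three_ne_zero).1 hcube)

section Conclusion

variable {n 𝕜 : Type*} [Fintype n] [DecidableEq n] [NormedField 𝕜] [ProperSpace 𝕜]

lemma mul_comm_of_isDiagExcept {Γ : Subgroup (GL n 𝕜)} [DiscreteTopology Γ] {p q : n}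
    (hΓ : ∀ γ ∈ Γ, IsDiagExcept p q (γ : Matrix n n 𝕜)) (hpq : p ≠ q)
    (htf : ∀ γ ∈ Γ, IsOfFinOrder (γ p p / γ q q) → γ p p / γ q q = 1) {a b : GL n 𝕜}
    (ha : a ∈ Γ) (hb : b ∈ Γ) : a * b = b * a := by
  obtain ⟨x, hx⟩ := exists_commutatorElement_eq_transvection hΓ hpq ha hb
  rcases eq_or_ne x 0 with rfl | hx0
  · rw [← commutatorElement_eq_one_iff_mul_comm]
    exact Units.ext (by rw [hx, transvection_zero, Units.val_one])
  · have hdiag {γ} (hγ : γ ∈ Γ) : γ p p = γ q q := by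
      have hq : γ q q ≠ 0 := (isUnit_apply_self_of_isDiagExcept hΓ hpq hγ q).ne_zero
      refine (div_eq_one_iff_eq hq).1 (htf γ hγ ?_)
      exact isOfFinOrder_of_semiconjBy_transvection hγ (commutatorElement_mem ha hb) hx0 hx
        ((hΓ γ hγ).semiconjBy_transvection hpq hq)
    exact Units.ext ((hΓ a ha).commute_of_apply_self_eq (hΓ b hb) hpq (hdiag ha) (hdiag hb))

lemma isDiagExcept_of_diagonal_mem {Γ : Subgroup (GL (Fin 3) 𝕜)} [DiscreteTopology Γ]
    (hupper : ∀ γ ∈ Γ, (γ : Matrix (Fin 3) (Fin 3) 𝕜).IsUpperTriangular) {g : GL (Fin 3) 𝕜}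
    (hg : g ∈ Γ) {a b : 𝕜} (hgd : (g : Matrix (Fin 3) (Fin 3) 𝕜) = diagonal ![a, b, b])
    (hab : ‖a‖ < ‖b‖) {γ : GL (Fin 3) 𝕜} (hγ : γ ∈ Γ) :
    IsDiagExcept 1 2 (γ : Matrix (Fin 3) (Fin 3) 𝕜) := by
  have hzero (i j : Fin 3) (hij : ‖(![a, b, b] : Fin 3 → 𝕜) j‖ < ‖(![a, b, b] : Fin 3 → 𝕜) i‖) :
      γ i j = 0 := by
    apply hupper γ hγ
    fin_cases i <;> fin_cases j <;> simp [hab.not_gt] at hij ⊢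
  have h01 : γ 0 1 = 0 := apply_eq_zero_of_diagonal_mem hg hγ hgd hzero hab
  have h02 : γ 0 2 = 0 := apply_eq_zero_of_diagonal_mem hg hγ hgd hzero hab
  intro i j hne hnot
  rcases hne.lt_or_gt with hlt | hgt
  · fin_cases i <;> fin_cases j <;> simp [h01, h02] at hlt hnot ⊢
  · exact hupper γ hγ hgt

theorem stmt_6_general (Γ : Subgroup (GL (Fin 3) 𝕜)) [DiscreteTopology Γ]
    (hnoncomm : ¬ ∀ a ∈ Γ, ∀ b ∈ Γ, a * b = b * a)
    (hupper : ∀ γ ∈ Γ, (γ : Matrix (Fin 3) (Fin 3) 𝕜).IsUpperTriangular)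
    (htf23 : ∀ γ ∈ Γ, IsOfFinOrder (γ 1 1 / γ 2 2) → γ 1 1 / γ 2 2 = 1)
    {g : GL (Fin 3) 𝕜} (hg : g ∈ Γ) {a b : 𝕜}
    (hgd : (g : Matrix (Fin 3) (Fin 3) 𝕜) = diagonal ![a, b, b]) : ‖a‖ = ‖b‖ := by
  by_contra hab
  have hΓ : ∀ γ ∈ Γ, IsDiagExcept 1 2 (γ : Matrix (Fin 3) (Fin 3) 𝕜) := fun γ hγ ↦ by
    rcases lt_or_gt_of_ne hab with hlt | hgt
    · exact isDiagExcept_of_diagonal_mem hupper hg hgd hlt hγ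
    · have hb : b ≠ 0 := (Pi.isUnit_iff.1 (isUnit_diagonal.1 (hgd ▸ g.isUnit)) 1).ne_zero
      have hgd_inv : ((g⁻¹ : GL (Fin 3) 𝕜) : Matrix (Fin 3) (Fin 3) 𝕜) =
          diagonal ![a⁻¹, b⁻¹, b⁻¹] := by
        rw [coe_inv_eq_diagonal_s6 hgd]
        congr 1
        ext i
        fin_cases i <;> rfl
      have hlt : ‖a⁻¹‖ < ‖b⁻¹‖ := by
        simpa only [norm_inv] using inv_strictAnti₀ (norm_pos_iff.2 hb) hgt
      exact isDiagExcept_of_diagonal_mem hupper (Γ.inv_mem hg) hgd_inv hlt hγ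
  exact hnoncomm fun a ha b hb ↦ mul_comm_of_isDiagExcept hΓ (by decide) htf23 ha hb

end Conclusion

/-- A discrete, non-commutative, torsion-free subgroup `Γ ≤ GL(3, ℂ)` of upper triangular
matrices, such that the multiplicative groups `λ₁₂(Γ)` and `λ₂₃(Γ)` are torsion free,
contains no complex homothety `diag(λ⁻², λ, λ)` with `|λ| ≠ 1`. -/
theorem stmt_6 (Γ : Subgroup (Matrix.GeneralLinearGroup (Fin 3) ℂ))
    (hdisc : DiscreteTopology Γ)
    (hnoncomm : ¬ ∀ a ∈ Γ, ∀ b ∈ Γ, a * b = b * a)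
    (hupper : ∀ γ ∈ Γ, ∀ i j : Fin 3, j < i → (γ : Matrix (Fin 3) (Fin 3) ℂ) i j = 0)
    (htf : ∀ γ ∈ Γ, ∀ n : ℕ, 0 < n → γ ^ n = 1 → γ = 1)
    (htf12 : ∀ γ ∈ Γ, ∀ n : ℕ, 0 < n →
      ((γ : Matrix (Fin 3) (Fin 3) ℂ) 0 0 / (γ : Matrix (Fin 3) (Fin 3) ℂ) 1 1) ^ n = 1 →
      (γ : Matrix (Fin 3) (Fin 3) ℂ) 0 0 / (γ : Matrix (Fin 3) (Fin 3) ℂ) 1 1 = 1)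
    (htf23 : ∀ γ ∈ Γ, ∀ n : ℕ, 0 < n →
      ((γ : Matrix (Fin 3) (Fin 3) ℂ) 1 1 / (γ : Matrix (Fin 3) (Fin 3) ℂ) 2 2) ^ n = 1 →
      (γ : Matrix (Fin 3) (Fin 3) ℂ) 1 1 / (γ : Matrix (Fin 3) (Fin 3) ℂ) 2 2 = 1) :
    ¬ ∃ γ ∈ Γ, ∃ lam : ℂ, lam ≠ 0 ∧ ‖lam‖ ≠ 1 ∧
      (γ : Matrix (Fin 3) (Fin 3) ℂ) = Matrix.diagonal ![lam⁻¹ ^ 2, lam, lam] := by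
  rintro ⟨g, hg, lam, hlam0, hlam1, hgd⟩
  exact norm_inv_sq_ne_norm_s6 hlam0 hlam1 <| stmt_6_general Γ hnoncomm
    (fun γ hγ i j ↦ hupper γ hγ i j) (fun γ hγ hfin ↦
      let ⟨n, hn, hpow⟩ := isOfFinOrder_iff_pow_eq_one.1 hfin
      htf23 γ hγ n hn hpow) hg hgd
end
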